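/- arXiv:1311.1779 — 2 statements merged into one kernel-verified Lean document; each statement's English description precedes it below -/
import Mathlib

section
/- Let q be a prime power, n ≥ 2, 1 ≤ k < n with gcd(k, n−k) = 1. Let K = F_{q^n}(z) be the rational function field and Ω an algebraic closure of K. Define f(T) = −z^{−1} · Tr_{n−k}(T) + Tr_k(T)^{q^{n−k}} and g(T) = Tr_{n−k}(T)^{q^k} − z · Tr_k(T) in K[T]. Then the intermediate field of Ω/K generated over K by all roots of f equals the intermediate field generated over K by all roots of g; i.e., the splitting fields of f and g over K coincide. -/
/-- The trace polynomial `Tr_i(x) = x + x^q + ⋯ + x^{q^{i-1}}`. -/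
def Tr {R : Type*} [CommRing R] (q i : ℕ) (x : R) : R :=
  ∑ j ∈ Finset.range i, x ^ q ^ j

open Polynomial in
/-- Additivity of Frobenius powers, packaged. -/
structure QAdd (R : Type*) [CommRing R] (q : ℕ) : Prop where
  two : 2 ≤ q
  cast : (q : R) = 0
  add : ∀ (i : ℕ) (x y : R), (x + y) ^ q ^ i = x ^ q ^ i + y ^ q ^ i
  sub : ∀ (i : ℕ) (x y : R), (x - y) ^ q ^ i = x ^ q ^ i - y ^ q ^ i

lemma QAdd.mk' (R : Type*) [CommRing R] (p e : ℕ) (hp : p.Prime) (he : 0 < e) [CharP R p] :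
    QAdd R (p ^ e) := by
  have : Fact p.Prime := ⟨hp⟩
  refine ⟨?_, ?_, ?_, ?_⟩
  · calc 2 ≤ p := hp.two_le
      _ = p ^ 1 := (pow_one p).symm
      _ ≤ p ^ e := Nat.pow_le_pow_right hp.pos he
  · rw [Nat.cast_pow, CharP.cast_eq_zero, zero_pow he.ne']
  · intro i x y
    rw [← pow_mul]; exact add_pow_char_pow x y _ _
  · intro i x y
    rw [← pow_mul]; exact sub_pow_char_pow x y _

section basics
variable {R : Type*} [CommRing R] {q : ℕ}

lemma Tr_succ (i : ℕ) (x : R) : Tr q (i + 1) x = Tr q i x + x ^ q ^ i := by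
  simp [Tr, Finset.sum_range_succ]

lemma Tr_zero (x : R) : Tr q 0 x = 0 := by simp [Tr]

lemma QAdd.Tr_add (h : QAdd R q) (i : ℕ) (x y : R) : Tr q i (x + y) = Tr q i x + Tr q i y := by
  simp [Tr, h.add, Finset.sum_add_distrib]

lemma QAdd.Tr_sub (h : QAdd R q) (i : ℕ) (x y : R) : Tr q i (x - y) = Tr q i x - Tr q i y := by
  simp [Tr, h.sub, Finset.sum_sub_distrib]

lemma pow_q_pow (x : R) (i j : ℕ) : (x ^ q ^ i) ^ q ^ j = x ^ q ^ (i + j) := by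
  rw [← pow_mul, ← pow_add]

lemma pow_q_pow_q (x : R) (i : ℕ) : (x ^ q ^ i) ^ q = x ^ q ^ (i + 1) := by
  rw [← pow_mul, ← pow_succ]

lemma QAdd.add1 (h : QAdd R q) (x y : R) : (x + y) ^ q = x ^ q + y ^ q := by
  simpa using h.add 1 x y

lemma QAdd.zero_pow (h : QAdd R q) (i : ℕ) : (0 : R) ^ q ^ i = 0 := by
  have := h.two
  exact _root_.zero_pow (pow_ne_zero _ (by omega))

lemma QAdd.Tr_pow (h : QAdd R q) (i j : ℕ) (x : R) : Tr q i (x ^ q ^ j) = (Tr q i x) ^ q ^ j := by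
  induction i with
  | zero => simp [Tr_zero, h.zero_pow]
  | succ i ih => rw [Tr_succ, Tr_succ, ih, h.add, pow_q_pow, pow_q_pow, add_comm i j]

lemma QAdd.Tr_succ' (h : QAdd R q) (i : ℕ) (x : R) : Tr q (i + 1) x = (Tr q i x) ^ q + x := by
  induction i with
  | zero => 
    have := h.two
    simp [Tr_zero, Tr_succ, _root_.zero_pow (show q ≠ 0 by omega)]
  | succ i ih => 
    have e : Tr q (i + 1) x ^ q = Tr q i x ^ q + x ^ q ^ (i + 1) := by
      rw [Tr_succ, h.add1, pow_q_pow_q]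
    rw [Tr_succ, e]
    linear_combination ih

lemma QAdd.Tr_comm (h : QAdd R q) (i j : ℕ) (x : R) :
    Tr q i (Tr q j x) = Tr q j (Tr q i x) := by
  induction i with
  | zero =>
    have : Tr q j (0 : R) = 0 := by simp [Tr, h.zero_pow]
    simp [Tr_zero, this]
  | succ i ih => rw [Tr_succ, Tr_succ, h.Tr_add, ih, h.Tr_pow]

/-- `S_m(x,y) = ∑_{j<m} y^{q^j} Tr_{j+1}(x)`. -/
def SS (q m : ℕ) (x y : R) : R := ∑ j ∈ Finset.range m, y ^ q ^ j * Tr q (j + 1) x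

lemma SS_succ (m : ℕ) (x y : R) : SS q (m + 1) x y = SS q m x y + y ^ q ^ m * Tr q (m + 1) x := by
  simp [SS, Finset.sum_range_succ]

lemma QAdd.SS_frob (h : QAdd R q) (m : ℕ) (x y : R) :
    (SS q m x y) ^ q - SS q m x y = y ^ q ^ m * (Tr q m x) ^ q - x * Tr q m y := by
  induction m with
  | zero =>
    have := h.two
    simp [SS, Tr_zero, _root_.zero_pow (show q ≠ 0 by omega)]
  | succ m ih =>
    have e1 := h.Tr_succ' m x
    rw [SS_succ, h.add1, mul_pow, pow_q_pow_q, Tr_succ m y]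
    linear_combination ih - y ^ q ^ m * e1

/-- the pairing -/
def QQ (q c d : ℕ) (z u y : R) : R :=
  SS q d (z * u ^ q ^ (c + 1)) y + y ^ q ^ d * Tr q (c + 1) u + SS q c (y ^ q ^ (d + 1)) (u ^ q)

lemma QAdd.QQ_frob (h : QAdd R q) (c d : ℕ) (z u y : R)
    (hu : Tr q (c + 1) u = Tr q (d + 1) (z * u ^ q ^ (c + 1)))
    (hy : (Tr q (c + 1) y) ^ q ^ (d + 1) = z * Tr q (d + 1) y) :
    (QQ q c d z u y) ^ q = QQ q c d z u y := by
  have h1 := h.SS_frob (d + 1) (z * u ^ q ^ (c + 1)) y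
  have h2 := h.SS_frob c (y ^ q ^ (d + 1)) (u ^ q)
  have hQ : QQ q c d z u y = SS q (d + 1) (z * u ^ q ^ (c + 1)) y
      + SS q c (y ^ q ^ (d + 1)) (u ^ q) := by
    rw [SS_succ, ← hu, QQ]
  rw [hQ, h.add1]
  have e1 : (u ^ q) ^ q ^ c = u ^ q ^ (c + 1) := by rw [← pow_mul, pow_succ']
  have e2 := h.Tr_succ' c (y ^ q ^ (d + 1))
  have e3 : Tr q c (u ^ q) = (Tr q c u) ^ q := by simpa using h.Tr_pow c 1 u
  have e4 := h.Tr_succ' c u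
  have e5 : (Tr q (c + 1) u) ^ q = (Tr q c u) ^ q + u ^ q ^ (c + 1) := by
    rw [Tr_succ, h.add1, pow_q_pow_q]
  rw [e1, e3] at h2
  rw [← hu, e5] at h1
  rw [h.Tr_pow, hy] at e2
  linear_combination h1 + h2 - u ^ q ^ (c + 1) * e2

lemma QAdd.SS_sub_left (h : QAdd R q) (m : ℕ) (x x' y : R) :
    SS q m (x - x') y = SS q m x y - SS q m x' y := by
  simp [SS, h.Tr_sub, mul_sub]

lemma QAdd.SS_sub_right (h : QAdd R q) (m : ℕ) (x y y' : R) :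
    SS q m x (y - y') = SS q m x y - SS q m x y' := by
  simp [SS, h.sub, sub_mul]

lemma QAdd.QQ_sub (h : QAdd R q) (c d : ℕ) (z u y y' : R) :
    QQ q c d z u (y - y') = QQ q c d z u y - QQ q c d z u y' := by
  simp only [QQ, h.SS_sub_right, h.sub, h.SS_sub_left]
  ring

variable {R' : Type*} [CommRing R']

lemma map_Tr (φ : R →+* R') (i : ℕ) (x : R) : φ (Tr q i x) = Tr q i (φ x) := by
  simp [Tr]

lemma map_SS (φ : R →+* R') (i : ℕ) (x y : R) : φ (SS q i x y) = SS q i (φ x) (φ y) := by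
  simp [SS, map_Tr]

lemma map_QQ (φ : R →+* R') (c d : ℕ) (z u y : R) :
    φ (QQ q c d z u y) = QQ q c d (φ z) (φ u) (φ y) := by
  simp [QQ, map_Tr, map_SS]

end basics

section poly
open Polynomial
variable {Ω : Type*} [Field Ω] {q : ℕ}

lemma natDegree_Tr_le (i D : ℕ) (hq : 2 ≤ q) (P : (Polynomial Ω)) (hP : P.natDegree ≤ D) :
    (Tr q (i + 1) P).natDegree ≤ q ^ i * D := by
  refine natDegree_sum_le_of_forall_le _ _ ?_
  intro j hj
  refine natDegree_pow_le.trans ?_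
  have hj' : j ≤ i := by simpa [Nat.lt_succ_iff] using hj
  exact Nat.mul_le_mul (Nat.pow_le_pow_right (by omega) hj') hP

lemma deriv_pow_q (hc : (q : Ω) = 0) (i : ℕ) (P : (Polynomial Ω)) :
    derivative (P ^ q ^ (i + 1)) = 0 := by
  rw [derivative_pow]
  simp [pow_succ, hc]

lemma deriv_Tr (hc : (q : Ω) = 0) (i : ℕ) (P : (Polynomial Ω)) :
    derivative (Tr q (i + 1) P) = derivative P := by
  induction i with
  | zero => simp [Tr]
  | succ i ih => rw [Tr_succ, derivative_add, ih, deriv_pow_q hc, add_zero]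

lemma QAdd.natDegree_Tr_X (h : QAdd Ω q) (i : ℕ) : (Tr q (i + 1) (X : (Polynomial Ω))).natDegree = q ^ i := by
  have := h.two
  induction i with
  | zero => simp [Tr]
  | succ i ih =>
    rw [Tr_succ, natDegree_add_eq_right_of_natDegree_lt] <;> rw [natDegree_X_pow]
    rw [ih]
    exact Nat.pow_lt_pow_right (by omega) (by omega)

/-- the polynomial whose roots are taken -/
noncomputable def GG (q c d : ℕ) (z : Ω) : (Polynomial Ω) :=
  (Tr q (c + 1) X) ^ q ^ (d + 1) - C z * Tr q (d + 1) X

lemma GG_eval (c d : ℕ) (z t : Ω) :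
    (GG q c d z).eval t = (Tr q (c + 1) t) ^ q ^ (d + 1) - z * Tr q (d + 1) t := by
  have h1 : ∀ i, (Tr q i (X : (Polynomial Ω))).eval t = Tr q i t := by
    intro i
    simpa using map_Tr (q := q) (Polynomial.evalRingHom t) i X
  simp [GG, h1]

lemma QAdd.natDegree_GG (h : QAdd Ω q) (c d : ℕ) (z : Ω) :
    (GG q c d z).natDegree = q ^ (c + d + 1) := by
  have := h.two
  have h1 : ((Tr q (c + 1) (X : (Polynomial Ω))) ^ q ^ (d + 1)).natDegree = q ^ (c + d + 1) := by
    rw [natDegree_pow, h.natDegree_Tr_X, ← pow_add]; congr 1; ring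
  rw [GG, natDegree_sub_eq_left_of_natDegree_lt, h1]
  rw [h1]
  refine (natDegree_C_mul_le _ _).trans_lt ?_
  rw [h.natDegree_Tr_X]
  exact Nat.pow_lt_pow_right (by omega) (by omega)

lemma QAdd.separable_GG (h : QAdd Ω q) (c d : ℕ) (z : Ω) (hz : z ≠ 0) :
    (GG q c d z).Separable := by
  rw [Polynomial.Separable]
  have : derivative (GG q c d z) = C (-z) := by
    rw [GG, derivative_sub, deriv_pow_q h.cast, derivative_C_mul, deriv_Tr h.cast]
    simp
  rw [this]
  exact isCoprime_of_isUnit_right _ (isUnit_C.2 (by simpa using hz))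
where
  isCoprime_of_isUnit_right {x : (Polynomial Ω)} (y : (Polynomial Ω)) (hx : IsUnit x) : IsCoprime y x := by
    obtain ⟨v, hv⟩ := hx.exists_left_inv
    exact ⟨0, v, by simp [hv]⟩

lemma QAdd.card_roots_GG (h : QAdd Ω q) [IsAlgClosed Ω] (c d : ℕ) (z : Ω) (hz : z ≠ 0) :
    ∃ s : Finset Ω, s.card = q ^ (c + d + 1) ∧
      ∀ t ∈ s, (Tr q (c + 1) t) ^ q ^ (d + 1) - z * Tr q (d + 1) t = 0 := by
  classical
  refine ⟨(GG q c d z).roots.toFinset, ?_, ?_⟩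
  · rw [Multiset.toFinset_card_of_nodup (nodup_roots (h.separable_GG c d z hz)), ← h.natDegree_GG c d z]
    exact splits_iff_card_roots.1 (IsAlgClosed.splits _)
  · intro t ht
    rw [Multiset.mem_toFinset] at ht
    have := (mem_roots'.1 ht).2
    rwa [IsRoot, GG_eval] at this

/-- the pairing polynomial -/
lemma QAdd.QQ_poly (h : QAdd Ω q) (c d : ℕ) (z y : Ω) (hy : y ≠ 0) (s : Finset Ω)
    (hs : ∀ u ∈ s, QQ q c d z u y = 0) : s.card ≤ q ^ (c + d) := by
  have h2 := h.two
  set P : (Polynomial Ω) := QQ q c d (C z) X (C y) with hP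
  have hev : ∀ u, P.eval u = QQ q c d z u y := by
    intro u
    simpa [hP] using map_QQ (q := q) (Polynomial.evalRingHom u) c d (C z) X (C y)
  have hTrC : ∀ i (x : Ω), Tr q i (C x) = C (Tr q i x) := fun i x => (map_Tr C i x).symm
  have hder : derivative P = C (y ^ q ^ d) := by
    rw [hP, QQ, derivative_add, derivative_add, ← C_pow, derivative_C_mul, deriv_Tr h.cast]
    have e1 : derivative (SS q d (C z * X ^ q ^ (c + 1)) (C y) : (Polynomial Ω)) = 0 := by
      rw [SS, derivative_sum]
      refine Finset.sum_eq_zero fun j _ => ?_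
      rw [← C_pow, derivative_C_mul, deriv_Tr h.cast, derivative_C_mul, deriv_pow_q h.cast]
      simp
    have e2 : derivative (SS q c (C y ^ q ^ (d + 1)) (X ^ q) : (Polynomial Ω)) = 0 := by
      rw [SS, derivative_sum]
      refine Finset.sum_eq_zero fun j _ => ?_
      have : ((X : (Polynomial Ω)) ^ q) ^ q ^ j = X ^ q ^ (j + 1) := by rw [← pow_mul, pow_succ']
      rw [this, ← C_pow, hTrC, mul_comm, derivative_C_mul, deriv_pow_q h.cast]
      simp
    rw [e1, e2]; simp
  have hP0 : P ≠ 0 := by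
    intro h0
    rw [h0] at hder
    rw [derivative_zero] at hder
    exact pow_ne_zero _ hy (C_eq_zero.1 hder.symm)
  have hdeg : P.natDegree ≤ q ^ (c + d) := by
    have hmono : ∀ i j, i ≤ j → q ^ i ≤ q ^ j := fun i j hij => Nat.pow_le_pow_right (by omega) hij
    rw [hP, QQ]
    refine natDegree_add_le_of_degree_le (natDegree_add_le_of_degree_le ?_ ?_) ?_
    · refine natDegree_sum_le_of_forall_le _ _ fun j hj => ?_
      have hj' : j < d := by simpa using hj
      rw [← C_pow]
      refine (natDegree_C_mul_le _ _).trans ?_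
      refine (natDegree_Tr_le j (q ^ (c + 1)) h2 _ ?_).trans ?_
      · exact (natDegree_C_mul_le _ _).trans (by simp)
      · rw [← pow_add]; exact hmono _ _ (by omega)
    · rw [← C_pow]
      refine (natDegree_C_mul_le _ _).trans ?_
      rw [h.natDegree_Tr_X]
      exact hmono _ _ (by omega)
    · refine natDegree_sum_le_of_forall_le _ _ fun j hj => ?_
      have hj' : j < c := by simpa using hj
      rw [← C_pow, hTrC, mul_comm]
      refine (natDegree_C_mul_le _ _).trans ?_
      rw [← pow_mul, natDegree_X_pow, ← pow_succ']
      exact hmono _ _ (by omega)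
  refine le_trans ?_ hdeg
  refine card_le_degree_of_subset_roots (p := P) ?_
  intro u hu
  rw [mem_roots hP0, IsRoot, hev]
  exact hs u (by simpa using hu)

lemma QAdd.inj (h : QAdd Ω q) (a b : ℕ) (hab : Nat.Coprime a b) (t : Ω)
    (ha : Tr q a t = 0) (hb : Tr q b t = 0) : t = 0 := by
  have key : ∀ i, Tr q i t = 0 → Function.IsPeriodicPt (fun x : Ω => x ^ q) i t := by
    intro i hi
    have e1 := h.Tr_succ' i t
    rw [Tr_succ, hi] at e1
    have := h.two
    rw [Function.IsPeriodicPt, Function.IsFixedPt, pow_iterate]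
    simpa [_root_.zero_pow (show q ≠ 0 by omega)] using e1
  have h1 := (key a ha).gcd (key b hb)
  rw [hab] at h1
  have h2 : t ^ q = t := by simpa [Function.IsPeriodicPt, Function.IsFixedPt] using h1
  have h3 : ∀ i, t ^ q ^ i = t := by
    intro i
    induction i with
    | zero => simp
    | succ i ih => rw [pow_succ, pow_mul, ih, h2]
  have h4 : ∀ i, Tr q i t = i * t := by
    intro i; simp [Tr, h3]
  rw [h4] at ha hb
  have h5 := Nat.gcd_eq_gcd_ab a b
  rw [hab] at h5
  have h6 : (1 : Ω) = a * (Nat.gcdA a b : Ω) + b * (Nat.gcdB a b : Ω) := by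
    exact_mod_cast congrArg (Int.cast : ℤ → Ω) h5
  calc t = 1 * t := (one_mul t).symm
    _ = 0 := by rw [h6]; linear_combination (Nat.gcdA a b : Ω) * ha + (Nat.gcdB a b : Ω) * hb

lemma QAdd.nondeg (h : QAdd Ω q) [IsAlgClosed Ω] (c d : ℕ) (hcd : Nat.Coprime (d + 1) (c + 1))
    (z y : Ω) (hz : z ≠ 0)
    (hs : ∀ t, (Tr q (d + 1) t) ^ q ^ (c + 1) - z⁻¹ * Tr q (c + 1) t = 0 →
      QQ q c d z (Tr q (d + 1) t) y = 0) : y = 0 := by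
  classical
  by_contra hy
  obtain ⟨s, hcard, hs'⟩ := h.card_roots_GG d c z⁻¹ (inv_ne_zero hz)
  have hinj : Set.InjOn (fun t => Tr q (d + 1) t) (s : Set Ω) := by
    intro t ht t' ht' htt
    have e1 := hs' t ht
    have e2 := hs' t' ht'
    have htt' : Tr q (d + 1) t = Tr q (d + 1) t' := htt
    rw [htt'] at e1
    have e3 : z⁻¹ * (Tr q (c + 1) t - Tr q (c + 1) t') = 0 := by linear_combination e2 - e1
    rcases mul_eq_zero.1 e3 with e | e
    · exact absurd e (inv_ne_zero hz)
    · refine sub_eq_zero.1 (h.inj (d + 1) (c + 1) hcd _ ?_ ?_)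
      · rw [h.Tr_sub, htt', sub_self]
      · rw [h.Tr_sub, e]
  have h1 := h.QQ_poly c d z y hy (s.image fun t => Tr q (d + 1) t) (by
    intro u hu
    obtain ⟨t, ht, rfl⟩ := Finset.mem_image.1 hu
    exact hs t (hs' t ht))
  rw [Finset.card_image_of_injOn hinj, hcard] at h1
  have h2 := h.two
  have : q ^ (c + d) < q ^ (d + c + 1) := Nat.pow_lt_pow_right (by omega) (by omega)
  omega

lemma incl (K : Type*) [Field K] [Algebra K Ω] [IsAlgClosure K Ω] (h : QAdd Ω q)
    (hFq : ∀ x : Ω, x ^ q = x → x ∈ (algebraMap K Ω).range)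
    (c d : ℕ) (hcd : Nat.Coprime (d + 1) (c + 1)) (z0 : K) (hz0 : z0 ≠ 0) (z : Ω)
    (hzz : z = algebraMap K Ω z0) :
    IntermediateField.adjoin K {t : Ω | (Tr q (c + 1) t) ^ q ^ (d + 1) - z * Tr q (d + 1) t = 0}
    ≤ IntermediateField.adjoin K
      {t : Ω | (Tr q (d + 1) t) ^ q ^ (c + 1) - z⁻¹ * Tr q (c + 1) t = 0} := by
  have : IsAlgClosed Ω := IsAlgClosure.isAlgClosed K
  have : Algebra.IsAlgebraic K Ω := IsAlgClosure.isAlgebraic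
  have hz : z ≠ 0 := by rw [hzz]; simpa using hz0
  rw [IntermediateField.adjoin_le_iff]
  intro y hy
  set L := IntermediateField.adjoin K
      {t : Ω | (Tr q (d + 1) t) ^ q ^ (c + 1) - z⁻¹ * Tr q (c + 1) t = 0} with hL
  have hy' : (Tr q (c + 1) y) ^ q ^ (d + 1) - z * Tr q (d + 1) y = 0 := hy
  have : Algebra.IsAlgebraic L Ω := Algebra.IsAlgebraic.tower_top (K := K) L
  have : IsAlgClosure L Ω := ⟨inferInstance, inferInstance⟩
  have : Normal L Ω := IsAlgClosure.normal L Ω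
  have hsep : IsSeparable L y := by
    have hg : ∃ G : L[X], G.map (algebraMap L Ω) = GG q c d z := by
      refine ⟨GG q c d (algebraMap K L z0), ?_⟩
      have e : ∀ i, (Tr q i (X : L[X])).map (algebraMap L Ω) = Tr q i X := by
        intro i
        simpa using map_Tr (q := q) (Polynomial.mapRingHom (algebraMap L Ω)) i X
      simp only [GG, Polynomial.map_sub, Polynomial.map_pow, Polynomial.map_mul, e, map_C]
      rw [hzz, ← IsScalarTower.algebraMap_apply]
    obtain ⟨G, hG⟩ := hg
    have hGsep : G.Separable := by
      rw [← Polynomial.separable_map (algebraMap L Ω), hG]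
      exact h.separable_GG c d z hz
    refine hGsep.of_dvd (minpoly.dvd L y ?_)
    rw [aeval_def, ← eval_map, hG, GG_eval, hy']
  by_contra hyL
  have hnot : y ∉ (⊥ : Subalgebra L Ω) := by
    intro hb
    obtain ⟨w, hw⟩ := Algebra.mem_bot.1 hb
    apply hyL
    rw [← hw]
    exact w.2
  obtain ⟨y', hne, hconj⟩ := (notMem_iff_exists_ne_and_isConjRoot hsep
    (IsAlgClosed.splits _)).1 hnot
  obtain ⟨σ, hσ⟩ := isConjRoot_iff_exists_algEquiv.1 hconj
  have hσK : ∀ w : K, σ (algebraMap K Ω w) = algebraMap K Ω w := by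
    intro w
    rw [IsScalarTower.algebraMap_apply K L Ω]
    exact σ.commutes _
  have hσL : ∀ w ∈ L, σ w = w := fun w hw => σ.commutes ⟨w, hw⟩
  have hfix : σ y = y := by
    rw [← sub_eq_zero]
    refine h.nondeg c d hcd z _ hz ?_
    intro t ht
    rw [h.QQ_sub, sub_eq_zero]
    have htL : t ∈ L := IntermediateField.subset_adjoin _ _ ht
    have hw : z * (Tr q (d + 1) t) ^ q ^ (c + 1) = Tr q (c + 1) t := by
      rw [sub_eq_zero.1 ht, mul_inv_cancel_left₀ hz]
    have hfr := h.QQ_frob c d z (Tr q (d + 1) t) y (by rw [hw, h.Tr_comm]) (sub_eq_zero.1 hy')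
    obtain ⟨w, hw'⟩ := hFq _ hfr
    have hm := map_QQ (q := q) (σ : Ω →+* Ω) c d z (Tr q (d + 1) t) y
    rw [map_Tr] at hm
    have a1 : (σ : Ω →+* Ω) t = t := hσL t htL
    have a2 : (σ : Ω →+* Ω) z = z := by rw [hzz]; exact hσK _
    have a3 : (σ : Ω →+* Ω) y = σ y := rfl
    rw [a1, a2, a3] at hm
    rw [← hm, ← hw']
    exact hσK _
  exact hne (σ.injective (hfix.trans hσ.symm))

end poly

/-- Over `K = F_{q^n}(z)` with algebraic closure `Ω`, the intermediate field
of `Ω/K` generated by all roots of `f(T) = −z^{−1}·Tr_{n−k}(T) + Tr_k(T)^{q^{n−k}}` equals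
the one generated by all roots of `g(T) = Tr_{n−k}(T)^{q^k} − z·Tr_k(T)`; i.e. the
splitting fields of `f` and `g` over `K` coincide. -/
theorem stmt_11 (p e q n k : ℕ) (hp : p.Prime) (he : 0 < e) (hq : q = p ^ e)
    (hn : 2 ≤ n) (hk1 : 1 ≤ k) (hkn : k < n) (hgcd : Nat.gcd k (n - k) = 1)
    (F : Type*) [Field F] [Fintype F] (hF : Fintype.card F = q ^ n)
    (Ω : Type*) [Field Ω] [Algebra (RatFunc F) Ω] [IsAlgClosure (RatFunc F) Ω]
    (z : Ω) (hz : z = algebraMap (RatFunc F) Ω RatFunc.X) :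
    IntermediateField.adjoin (RatFunc F)
        {t : Ω | -z⁻¹ * Tr q (n - k) t + (Tr q k t) ^ q ^ (n - k) = 0}
      = IntermediateField.adjoin (RatFunc F)
        {t : Ω | (Tr q (n - k) t) ^ q ^ k - z * Tr q k t = 0} := by
  classical
  have : Fact p.Prime := ⟨hp⟩
  have hcharF : CharP F p := by
    obtain ⟨r, hr⟩ := CharP.exists F
    obtain ⟨m, hrp, hcard⟩ := FiniteField.card F r
    have hdvd : r ∣ p := by
      have : r ∣ p ^ (e * n) := by
        rw [pow_mul, ← hq, ← hF, hcard]
        exact dvd_pow_self _ m.ne_zero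
      exact hrp.dvd_of_dvd_pow this
    rwa [(Nat.prime_dvd_prime_iff_eq hrp hp).1 hdvd] at hr
  let φ : F →+* Ω := (algebraMap (RatFunc F) Ω).comp (RatFunc.C)
  have : CharP Ω p := charP_of_injective_ringHom φ.injective p
  have h : QAdd Ω q := hq ▸ QAdd.mk' Ω p e hp he
  have h2 := h.two
  have hFq : ∀ x : Ω, x ^ q = x → x ∈ (algebraMap (RatFunc F) Ω).range := by
    intro x hx
    have h3 : ∀ i, x ^ q ^ i = x := by
      intro i
      induction i with
      | zero => simp
      | succ i ih => rw [pow_succ, pow_mul, ih, hx]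
    have h4 : (Polynomial.X ^ Fintype.card F - Polynomial.X : Polynomial F)
        = ∏ a : F, (Polynomial.X - Polynomial.C a) := by
      have hmon : (Polynomial.X ^ Fintype.card F - Polynomial.X : Polynomial F).Monic :=
        Polynomial.monic_X_pow_sub (by
          rw [Polynomial.degree_X]; exact_mod_cast Fintype.one_lt_card)
      have := Polynomial.prod_multiset_X_sub_C_of_monic_of_roots_card_eq hmon (by
        rw [FiniteField.roots_X_pow_card_sub_X,
          FiniteField.X_pow_card_sub_X_natDegree_eq F Fintype.one_lt_card]
        rfl)
      rw [FiniteField.roots_X_pow_card_sub_X] at this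
      exact this.symm
    have h5 := congrArg (Polynomial.eval₂ φ x) h4
    rw [Polynomial.eval₂_finsetProd] at h5
    simp only [Polynomial.eval₂_sub, Polynomial.eval₂_pow, Polynomial.eval₂_X,
      Polynomial.eval₂_C, hF, h3, sub_self] at h5
    obtain ⟨a, -, ha⟩ := Finset.prod_eq_zero_iff.1 h5.symm
    exact ⟨RatFunc.C a, (sub_eq_zero.1 ha).symm⟩
  obtain ⟨d, rfl⟩ : ∃ d, k = d + 1 := ⟨k - 1, by omega⟩
  obtain ⟨c, hc⟩ : ∃ c, n - (d + 1) = c + 1 := ⟨n - (d + 1) - 1, by omega⟩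
  rw [hc] at hgcd ⊢
  have hset : {t : Ω | -z⁻¹ * Tr q (c + 1) t + (Tr q (d + 1) t) ^ q ^ (c + 1) = 0}
      = {t : Ω | (Tr q (d + 1) t) ^ q ^ (c + 1) - z⁻¹ * Tr q (c + 1) t = 0} := by
    ext t
    simp only [Set.mem_ofPred_eq]
    rw [show -z⁻¹ * Tr q (c + 1) t + (Tr q (d + 1) t) ^ q ^ (c + 1)
      = (Tr q (d + 1) t) ^ q ^ (c + 1) - z⁻¹ * Tr q (c + 1) t by ring]
  rw [hset]
  apply le_antisymm
  · have := incl (RatFunc F) h hFq d c (Nat.Coprime.symm hgcd) (RatFunc.X)⁻¹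
      (inv_ne_zero RatFunc.X_ne_zero) z⁻¹ (by rw [hz, map_inv₀])
    rwa [inv_inv] at this
  · exact incl (RatFunc F) h hFq c d hgcd RatFunc.X RatFunc.X_ne_zero z hz
end

section
/- Let L be a field of characteristic p, q a power of p, n ≥ 2, 1 ≤ k < n, and a, b nonnegative integers. Let u, s ∈ L with Tr_{n−k}(u) ≠ a and Tr_k(u) ≠ b, and suppose Tr_n(s) · (Tr_{n−k}(u) − a) = Tr_{n−k}(s) · (Tr_n(u) − (a + b)). Then: (i) ( Tr_k(s) / (Tr_k(u) − b) )^{q^{n−k}} = Tr_{n−k}(s) / (Tr_{n−k}(u) − a); and (ii) Tr_{n−k}(s)^{q^k} · (Tr_{n−k}(u) − a) = Tr_{n−k}(s) · (Tr_n(u) − (a + b)) − Tr_k(s) · (Tr_{n−k}(u) − a). -/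
theorem Tr_add_aux (p e q : ℕ) (hp : p.Prime) (hq : q = p ^ e)
    (L : Type*) [Field L] [CharP L p] (i j : ℕ) (x : L) :
    Tr q (i + j) x = Tr q i x + (Tr q j x) ^ q ^ i := by
  haveI := Fact.mk hp
  unfold Tr
  rw [Finset.sum_range_add]
  congr 1
  have h : q ^ i = p ^ (e * i) := by rw [hq, pow_mul]
  rw [h, sum_pow_char_pow]
  refine Finset.sum_congr rfl fun l _ => ?_
  rw [← h, ← pow_mul, pow_add, mul_comm]

/-- If `Tr_{n−k}(u) ≠ a`, `Tr_k(u) ≠ b` and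
`Tr_n(s)·(Tr_{n−k}(u) − a) = Tr_{n−k}(s)·(Tr_n(u) − (a+b))`, then
`(Tr_k(s)/(Tr_k(u) − b))^{q^{n−k}} = Tr_{n−k}(s)/(Tr_{n−k}(u) − a)` and
`Tr_{n−k}(s)^{q^k}·(Tr_{n−k}(u) − a) = Tr_{n−k}(s)·(Tr_n(u) − (a+b)) − Tr_k(s)·(Tr_{n−k}(u) − a)`. -/
theorem stmt_13 (p e q n k a b : ℕ) (hp : p.Prime) (he : 0 < e) (hq : q = p ^ e)
    (hn : 2 ≤ n) (hk1 : 1 ≤ k) (hkn : k < n)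
    (L : Type*) [Field L] [CharP L p]
    (u s : L) (hua : Tr q (n - k) u ≠ (a : L)) (hub : Tr q k u ≠ (b : L))
    (hs : Tr q n s * (Tr q (n - k) u - (a : L))
          = Tr q (n - k) s * (Tr q n u - ((a : L) + (b : L)))) :
    (Tr q k s / (Tr q k u - (b : L))) ^ q ^ (n - k)
        = Tr q (n - k) s / (Tr q (n - k) u - (a : L)) ∧
    (Tr q (n - k) s) ^ q ^ k * (Tr q (n - k) u - (a : L))
        = Tr q (n - k) s * (Tr q n u - ((a : L) + (b : L)))
          - Tr q k s * (Tr q (n - k) u - (a : L)) := by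
  haveI := Fact.mk hp
  have h1 : ∀ x : L, Tr q n x = Tr q (n - k) x + (Tr q k x) ^ q ^ (n - k) := fun x => by
    rw [← Tr_add_aux p e q hp hq L, Nat.sub_add_cancel hkn.le]
  have h2 : ∀ x : L, Tr q n x = Tr q k x + (Tr q (n - k) x) ^ q ^ k := fun x => by
    rw [← Tr_add_aux p e q hp hq L, Nat.add_sub_cancel' hkn.le]
  constructor
  · have h : q ^ (n - k) = p ^ (e * (n - k)) := by rw [hq, pow_mul]
    have hb : (b : L) ^ q ^ (n - k) = b := by
      rw [h, ← iterateFrobenius_def, map_natCast]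
    have hsub : (Tr q k u - (b : L)) ^ q ^ (n - k) = (Tr q k u) ^ q ^ (n - k) - b := by
      conv_rhs => rw [← hb]
      rw [h, sub_pow_char_pow]
    have hne := pow_ne_zero (q ^ (n - k)) (sub_ne_zero.mpr hub)
    rw [div_pow, div_eq_div_iff hne (sub_ne_zero.mpr hua), hsub]
    rw [h1 s, h1 u] at hs
    linear_combination hs
  · have := h2 s
    linear_combination hs - (Tr q (n - k) u - (a : L)) * this
end
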